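/- arXiv:0802.3539 — 2 statements merged into one kernel-verified Lean document; each statement's English description precedes it below -/
import Mathlib

section
/- Fix γ > 0 and μ ∈ (0,1). The function ε ↦ ℋ( γ/(γ/(μ(1 − ε)) − 1), μ ) is strictly monotonically decreasing with respect to ε on the interval ( μ/(γ + μ), 1 ). -/
/-- The function ℋ(z, μ) = ln(μ/z) + (1/z − 1)·ln((1 − μ)/(1 − z)). -/
noncomputable def Hfun (z μ : ℝ) : ℝ :=
  Real.log (μ / z) + (1 / z - 1) * Real.log ((1 - μ) / (1 - z))

/-!
The `z`-derivative of `ℋ(z, μ)` is `ln ((1 - z) / (1 - μ)) / z²`, because the contributions of the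
two logarithms cancel; so `ℋ(·, μ)` increases on `(0, μ]`. With `x = μ (1 - ε)`, the point
`z = γ / (γ / x - 1)` is given by `1 / z = 1 / x - 1 / γ`, hence increases with `x ∈ (0, γ)`, and
it reaches `μ` exactly at `x = γ μ / (γ + μ)`, that is at `ε = μ / (γ + μ)`.
-/

open Set

section Substitution

lemma div_div_mul_div_add_sub_one {K : Type*} [Field K] {γ μ : K} (hγ : γ ≠ 0) (hμ : μ ≠ 0) :
    γ / (γ / (γ * μ / (γ + μ)) - 1) = μ := by
  have hsum : γ / (γ * μ / (γ + μ)) - 1 = γ / μ := by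
    field_simp
    ring
  rw [hsum, div_div_cancel₀ hγ]

variable {K : Type*} [Field K] [LinearOrder K] [IsStrictOrderedRing K] {γ μ : K}

lemma div_sub_one_pos {x : K} (hx : x ∈ Ioo 0 γ) : 0 < γ / x - 1 :=
  sub_pos.2 ((one_lt_div hx.1).2 hx.2)

lemma strictMonoOn_div_div_sub_one :
    StrictMonoOn (fun x : K => γ / (γ / x - 1)) (Ioo 0 γ) := by
  intro x hx y hy hxy
  have hγ : 0 < γ := hx.1.trans hx.2
  have hlt : γ / y - 1 < γ / x - 1 :=
    sub_lt_sub_right (div_lt_div_of_pos_left hγ hx.1 hxy) 1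
  exact div_lt_div_of_pos_left hγ (div_sub_one_pos hy) hlt

lemma mul_div_add_mem_Ioo (hγ : 0 < γ) (hμ : 0 < μ) : γ * μ / (γ + μ) ∈ Ioo 0 γ := by
  refine ⟨by positivity, ?_⟩
  rw [div_lt_iff₀ (by positivity)]
  gcongr
  exact lt_add_of_pos_left μ hγ

lemma mapsTo_div_div_sub_one (hγ : 0 < γ) (hμ : 0 < μ) :
    MapsTo (fun x : K => γ / (γ / x - 1)) (Ioc 0 (γ * μ / (γ + μ))) (Ioc 0 μ) := by
  intro x hx
  have hend := mul_div_add_mem_Ioo hγ hμ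
  have hxγ : x ∈ Ioo 0 γ := ⟨hx.1, hx.2.trans_lt hend.2⟩
  refine ⟨div_pos hγ (div_sub_one_pos hxγ), ?_⟩
  calc γ / (γ / x - 1)
      ≤ γ / (γ / (γ * μ / (γ + μ)) - 1) := strictMonoOn_div_div_sub_one.monotoneOn hxγ hend hx.2
    _ = μ := div_div_mul_div_add_sub_one hγ.ne' hμ.ne'

lemma mapsTo_mul_one_sub (hγ : 0 < γ) (hμ : 0 < μ) :
    MapsTo (fun ε : K => μ * (1 - ε)) (Ico (μ / (γ + μ)) 1) (Ioc 0 (γ * μ / (γ + μ))) := by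
  rintro ε ⟨hle, hlt⟩
  refine ⟨mul_pos hμ (sub_pos.2 hlt), ?_⟩
  calc μ * (1 - ε) ≤ μ * (1 - μ / (γ + μ)) := by gcongr
    _ = γ * μ / (γ + μ) := by
      field_simp
      ring

lemma strictAnti_mul_one_sub (hμ : 0 < μ) : StrictAnti fun ε : K => μ * (1 - ε) :=
  fun _ _ h => mul_lt_mul_of_pos_left (sub_lt_sub_left h 1) hμ

lemma strictAntiOn_div_div_mul_one_sub_sub_one (hγ : 0 < γ) (hμ : 0 < μ) :
    StrictAntiOn (fun ε : K => γ / (γ / (μ * (1 - ε)) - 1)) (Ico (μ / (γ + μ)) 1) := by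
  have hsub : Ioc 0 (γ * μ / (γ + μ)) ⊆ Ioo 0 γ :=
    fun _ hx => ⟨hx.1, hx.2.trans_lt (mul_div_add_mem_Ioo hγ hμ).2⟩
  exact (strictMonoOn_div_div_sub_one.mono hsub).comp_strictAntiOn
    ((strictAnti_mul_one_sub hμ).strictAntiOn _) (mapsTo_mul_one_sub hγ hμ)

end Substitution

lemma hasDerivAt_log_const_div {f : ℝ → ℝ} {f' x c : ℝ} (hf : HasDerivAt f f' x) (hc : c ≠ 0)
    (hx : f x ≠ 0) : HasDerivAt (fun y => Real.log (c / f y)) (-(f' / f x)) x := by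
  refine (((hasDerivAt_const x c).fun_div hf hx).log (div_ne_zero hc hx)).congr_deriv ?_
  field_simp
  ring

lemma hasDerivAt_Hfun {z μ : ℝ} (hz₀ : z ≠ 0) (hz₁ : z ≠ 1) (hμ₀ : μ ≠ 0) (hμ₁ : μ ≠ 1) :
    HasDerivAt (fun z => Hfun z μ) (Real.log ((1 - z) / (1 - μ)) / z ^ 2) z := by
  have hz : 1 - z ≠ 0 := sub_ne_zero.2 hz₁.symm
  have hlog : HasDerivAt (fun z => Real.log (μ / z)) (-(1 / z)) z :=
    hasDerivAt_log_const_div (hasDerivAt_id z) hμ₀ hz₀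
  have hlog' : HasDerivAt (fun z => Real.log ((1 - μ) / (1 - z))) (-(-1 / (1 - z))) z :=
    hasDerivAt_log_const_div ((hasDerivAt_id z).const_sub 1) (sub_ne_zero.2 hμ₁.symm) hz
  have hcoeff : HasDerivAt (fun z : ℝ => 1 / z - 1) (-(z ^ 2)⁻¹) z := by
    simpa only [one_div] using (hasDerivAt_inv hz₀).sub_const 1
  have hneg : Real.log ((1 - μ) / (1 - z)) = -Real.log ((1 - z) / (1 - μ)) := by
    rw [← Real.log_inv, inv_div]
  refine (hlog.add (hcoeff.mul hlog')).congr_deriv ?_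
  rw [hneg]
  field_simp
  ring

lemma strictMonoOn_Hfun {μ : ℝ} (hμ : μ < 1) : StrictMonoOn (fun z => Hfun z μ) (Ioc 0 μ) := by
  have hderiv : ∀ z ∈ Ioc 0 μ,
      HasDerivAt (fun z => Hfun z μ) (Real.log ((1 - z) / (1 - μ)) / z ^ 2) z := fun z hz =>
    hasDerivAt_Hfun hz.1.ne' (hz.2.trans_lt hμ).ne (hz.1.trans_le hz.2).ne' hμ.ne
  refine strictMonoOn_of_deriv_pos (convex_Ioc 0 μ)
    (fun z hz => (hderiv z hz).continuousAt.continuousWithinAt) fun z hz => ?_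
  rw [interior_Ioc] at hz
  rw [(hderiv z (Ioo_subset_Ioc_self hz)).deriv]
  have hratio : 1 < (1 - z) / (1 - μ) := (one_lt_div (sub_pos.2 hμ)).2 (sub_lt_sub_left hz.2 1)
  exact div_pos (Real.log_pos hratio) (pow_pos hz.1 2)

theorem stmt_7 (γ : ℝ) (hγ : 0 < γ) (μ : ℝ) (hμ : μ ∈ Set.Ioo (0 : ℝ) 1) :
    StrictAntiOn (fun ε : ℝ => Hfun (γ / (γ / (μ * (1 - ε)) - 1)) μ)
      (Set.Ioo (μ / (γ + μ)) 1) := by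
  have hmaps : MapsTo (fun ε : ℝ => γ / (γ / (μ * (1 - ε)) - 1))
      (Ico (μ / (γ + μ)) 1) (Ioc 0 μ) :=
    (mapsTo_div_div_sub_one hγ hμ.1).comp (mapsTo_mul_one_sub hγ hμ.1)
  exact ((strictMonoOn_Hfun hμ.2).comp_strictAntiOn
    (strictAntiOn_div_div_mul_one_sub_sub_one hγ hμ.1) hmaps).mono Ioo_subset_Ico_self
end

section
/- Fix γ > 0, μ ∈ (0,1), and δ with 2μ^γ < δ < 1. Then there exists ε* ∈ (0, 1/μ − 1) such that ℋ( (1 + ε*)μ, μ ) = ln(δ/2)/γ. -/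
/-!
Since `x log x → 0` as `x → 0⁺`, the function `ℋ(·, μ)` extends continuously to `z = 1` with value
`log μ`, while `ℋ(μ, μ) = 0`. The bounds `2 μ ^ γ < δ < 2` say exactly that `log (δ / 2) / γ` lies
strictly between these two values, so it is attained at some `z = (1 + ε) μ` with `μ < z < 1`.
-/

open Set Real

lemma Hfun_self (μ : ℝ) : Hfun μ μ = 0 := by
  simp [Hfun]

-- The factor `1 / z - 1` vanishes at `z = 1`, so the junk value `log ((1 - μ) / 0)` is harmless.
lemma Hfun_one_left (μ : ℝ) : Hfun 1 μ = log μ := by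
  simp [Hfun]

lemma Hfun_eq_add_negMulLog_div {z μ : ℝ} (hz : z ≠ 0) (hμ₀ : μ ≠ 0) (hμ₁ : μ ≠ 1) :
    Hfun z μ = log μ - log z + (1 / z - 1) * log (1 - μ) + negMulLog (1 - z) / z := by
  obtain rfl | hz₁ := eq_or_ne z 1
  · simp [Hfun_one_left]
  · rw [Hfun, log_div hμ₀ hz, log_div (sub_ne_zero.2 hμ₁.symm) (sub_ne_zero.2 hz₁.symm), negMulLog]
    field_simp
    ring

lemma continuousOn_Hfun {μ : ℝ} (hμ₀ : μ ≠ 0) (hμ₁ : μ ≠ 1) :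
    ContinuousOn (fun z ↦ Hfun z μ) {0}ᶜ := by
  have h_cont : ContinuousOn
      (fun z ↦ log μ - log z + (1 / z - 1) * log (1 - μ) + negMulLog (1 - z) / z) {0}ᶜ := by
    fun_prop (disch := simp)
  exact h_cont.congr fun z hz ↦ Hfun_eq_add_negMulLog_div hz hμ₀ hμ₁

lemma exists_mem_Ioo_Hfun_eq {μ t : ℝ} (hμ : 0 < μ) (ht : t ∈ Ioo (log μ) 0) :
    ∃ z ∈ Ioo μ 1, Hfun z μ = t := by
  have hμ₁ : μ < 1 := (log_neg_iff hμ).1 (ht.1.trans ht.2)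
  have h_cont : ContinuousOn (fun z ↦ Hfun z μ) (Icc μ 1) :=
    (continuousOn_Hfun hμ.ne' hμ₁.ne).mono fun _ hz ↦ (hμ.trans_le hz.1).ne'
  rw [← Hfun_one_left μ, ← Hfun_self μ] at ht
  exact intermediate_value_Ioo' hμ₁.le h_cont ht

lemma log_div_mem_Ioo {γ μ x : ℝ} (hγ : 0 < γ) (hμ : 0 < μ) (hx : x ∈ Ioo (μ ^ γ) 1) :
    log x / γ ∈ Ioo (log μ) 0 := by
  have h_pow : 0 < μ ^ γ := rpow_pos_of_pos hμ γ
  constructor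
  · rw [lt_div_iff₀' hγ, ← log_rpow hμ]
    exact log_lt_log h_pow hx.1
  · exact div_neg_of_neg_of_pos (log_neg (h_pow.trans hx.1) hx.2) hγ

theorem stmt_9_general {γ μ δ : ℝ} (hγ : 0 < γ) (hμ : 0 < μ) (hδ : δ ∈ Ioo (2 * μ ^ γ) 2) :
    ∃ ε ∈ Ioo 0 (1 / μ - 1), Hfun ((1 + ε) * μ) μ = log (δ / 2) / γ := by
  have h_half : δ / 2 ∈ Ioo (μ ^ γ) 1 := ⟨by linarith [hδ.1], by linarith [hδ.2]⟩
  obtain ⟨z, ⟨hμz, hz₁⟩, hz⟩ := exists_mem_Ioo_Hfun_eq hμ (log_div_mem_Ioo hγ hμ h_half)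
  refine ⟨z / μ - 1, ⟨sub_pos.2 ((one_lt_div hμ).2 hμz), by gcongr⟩, ?_⟩
  rw [add_sub_cancel, div_mul_cancel₀ z hμ.ne', hz]

theorem stmt_9 (γ : ℝ) (hγ : 0 < γ) (μ : ℝ) (hμ : μ ∈ Set.Ioo (0 : ℝ) 1)
    (δ : ℝ) (hδ : δ ∈ Set.Ioo (2 * μ ^ γ) 1) :
    ∃ ε : ℝ, ε ∈ Set.Ioo 0 (1 / μ - 1) ∧
      Hfun ((1 + ε) * μ) μ = Real.log (δ / 2) / γ :=
  stmt_9_general hγ hμ.1 ⟨hδ.1, hδ.2.trans one_lt_two⟩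
end
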